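/- Let α ≥ 4 be an even integer, let s_α > 0 be a minimizer of t ↦ Σ_{n∈ℤ} t·f_α(t n) over t > 0, and set F_α(x) = 1/(1 + s_α^α x^α). Then for every ξ with 0 ≤ ξ ≤ 1: (1 − ξ)·Σ_{n∈ℤ} F_α(n)·cos(2πnξ) − (1/(2π))·Σ_{n∈ℤ} F_α′(n)·sin(2πnξ) ≥ 0, where F_α′ denotes the derivative of F_α. (This expression equals the Fourier transform ψ̂_α(ξ) of the auxiliary function ψ_α constructed in the paper.) -/

import Mathlib

/-- The lattice energy `t ↦ Σ_{n∈ℤ} t·f_α(t n)` with `f_α(x) = 1/(1+x^α)`. -/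
noncomputable def latticeEnergy (α : ℕ) (t : ℝ) : ℝ :=
  ∑' n : ℤ, t * (1 / (1 + (t * (n : ℝ)) ^ α))

/-!
Write `F n = f_α(s n)`. As `s` is a critical point of the energy, `∑ (F n + n F' n) = 0`.
Subtracting `1 - ξ` times this sum and putting `θ = 2π(1 - ξ)`, the `n`-th term becomes a positive
multiple of `θ F n (cos(nθ) - 1) + F' n (sin(nθ) - nθ)`. Since `-n F' n = α (1 - F n) F n`, it is
nonnegative by the Cusa–Huygens inequality as soon as `α (1 - F n) ≥ 3`, the worst case being
`n = 1`. If `s > 1`, then `F 1 < 1 / 2` and every term `n ≠ 0` of the critical relation is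
nonpositive, so `1 + 2 (F 1 + F' 1) ≥ 0`, which together with `F 1 < 1 / 2` gives
`α (1 - F 1) ≥ 3`.

That `s > 1` is seen by exhibiting a dilation above `1` whose energy is lower than that of all
`t ≤ 1`. For `α ≥ 10` comparison with `∫ f_α ≥ 2` and the terms `n = 0, ±1` suffice. For
`α = 4, 6, 8` the margin is too small; there a partial fraction decomposition of `f_α` expresses
the energy through cotangents, which are exponentially close to their limit.
-/

open Real

/-- The function `f_α(x) = 1 / (1 + x ^ α)` of the paper, so that
`F_α x = profile α (s_α * x)`. -/
noncomputable def profile (α : ℕ) (x : ℝ) : ℝ := 1 / (1 + x ^ α)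

section Profile

variable {α : ℕ} {x y t : ℝ}

lemma one_add_pow_pos (hα : Even α) (x : ℝ) : 0 < 1 + x ^ α := by
  linarith [hα.pow_nonneg x]

lemma profile_pos (hα : Even α) (x : ℝ) : 0 < profile α x :=
  one_div_pos.2 (one_add_pow_pos hα x)

lemma profile_le_one (hα : Even α) (x : ℝ) : profile α x ≤ 1 :=
  div_le_one_of_le₀ (by linarith [hα.pow_nonneg x]) (one_add_pow_pos hα x).le

lemma profile_zero (hα : α ≠ 0) : profile α 0 = 1 := by
  simp [profile, hα]

lemma profile_neg (hα : Even α) (x : ℝ) : profile α (-x) = profile α x := by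
  rw [profile, profile, hα.neg_pow]

lemma profile_le_profile (hα : Even α) (h : |x| ≤ |y|) : profile α y ≤ profile α x := by
  refine one_div_le_one_div_of_le (one_add_pow_pos hα x) ?_
  rw [← hα.pow_abs x, ← hα.pow_abs y]
  gcongr

lemma profile_le_half (hα : Even α) (hx : 1 ≤ |x|) : profile α x ≤ 1 / 2 := by
  calc profile α x ≤ profile α 1 := profile_le_profile hα (by rwa [abs_one])
    _ = 1 / 2 := by norm_num [profile]

lemma hasDerivAt_profile (hα : Even α) (x : ℝ) :
    HasDerivAt (profile α) (-(α * x ^ (α - 1)) / (1 + x ^ α) ^ 2) x := by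
  have heq : profile α = fun y => (1 + y ^ α)⁻¹ := funext fun y => one_div _
  rw [heq]
  exact ((hasDerivAt_pow α x).const_add 1).fun_inv (one_add_pow_pos hα x).ne'

lemma differentiable_profile (hα : Even α) : Differentiable ℝ (profile α) := fun x =>
  (hasDerivAt_profile hα x).differentiableAt

lemma mul_deriv_profile (hα : Even α) (x : ℝ) :
    x * deriv (profile α) x = -(α * (1 - profile α x) * profile α x) := by
  have h := (one_add_pow_pos hα x).ne'
  rw [(hasDerivAt_profile hα x).deriv, profile]
  rcases α.eq_zero_or_pos with rfl | hpos
  · simp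
  · have hx : x * x ^ (α - 1) = x ^ α := mul_pow_sub_one hpos.ne' x
    field_simp
    linear_combination -hx

lemma abs_mul_deriv_profile_le (hα : Even α) (x : ℝ) :
    |x * deriv (profile α) x| ≤ α * profile α x := by
  have h0 := (profile_pos hα x).le
  have h1 := sub_nonneg.2 (profile_le_one hα x)
  rw [mul_deriv_profile hα, abs_neg, abs_of_nonneg (by positivity)]
  gcongr
  exact mul_le_of_le_one_right (by positivity) (by linarith)

lemma summable_profile_int (hα : Even α) (hα2 : 2 ≤ α) (ht : 0 < t) :
    Summable fun n : ℤ => profile α (t * n) := by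
  refine Summable.of_norm_bounded_eventually
    ((Real.summable_one_div_int_pow.2 (by omega : 1 < α)).mul_left (1 / t ^ α)) ?_
  filter_upwards [(Set.finite_singleton (0 : ℤ)).compl_mem_cofinite] with n hn
  have hn0 : (n : ℝ) ≠ 0 := Int.cast_ne_zero.2 hn
  rw [norm_of_nonneg (profile_pos hα _).le, div_mul_div_comm, one_mul, ← mul_pow]
  exact one_div_le_one_div_of_le (hα.pow_pos (by positivity)) (by linarith)

lemma summable_profile_nat (hα : Even α) (hα2 : 2 ≤ α) (ht : 0 < t) :
    Summable fun n : ℕ => profile α (t * n) := by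
  simpa only [Function.comp_def, Int.cast_natCast] using
    (summable_profile_int hα hα2 ht).comp_injective Nat.cast_injective

lemma latticeEnergy_eq (hα : Even α) (hα2 : 2 ≤ α) (ht : 0 < t) :
    latticeEnergy α t = t * (1 + 2 * ∑' n : ℕ, profile α (t * (n + 1 : ℕ))) := by
  change ∑' n : ℤ, t * profile α (t * n) = _
  have heven : Function.Even fun n : ℤ => profile α (t * n) := fun n => by
    simp only [Int.cast_neg, mul_neg, profile_neg hα]
  have hpnat := tsum_pnat_eq_tsum_succ (f := fun n : ℕ => profile α (t * ((n : ℤ) : ℝ)))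
  simp only [Int.cast_natCast] at hpnat
  rw [tsum_mul_left, tsum_int_eq_zero_add_two_mul_tsum_pnat heven (summable_profile_int hα hα2 ht)]
  simp only [Int.cast_natCast, hpnat, Int.cast_zero, mul_zero,
    profile_zero (by omega : α ≠ 0), nsmul_eq_mul, Nat.cast_ofNat]

end Profile

section UpperBound

variable {α : ℕ} {t : ℝ}

lemma hasSum_one_div_add_two_sq :
    HasSum (fun n : ℕ => (1 : ℝ) / ((n + 2 : ℕ) : ℝ) ^ 2) (π ^ 2 / 6 - 1) := by
  simpa [Finset.sum_range_succ] using (hasSum_nat_add_iff' 2).2 hasSum_zeta_two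

lemma profile_mul_add_two_le (hα2 : 2 ≤ α) (ht : 0 < t) (n : ℕ) :
    profile α (t * (n + 2 : ℕ)) ≤ 1 / (2 ^ (α - 2) * t ^ α) * (1 / ((n + 2 : ℕ) : ℝ) ^ 2) := by
  have hpow : (2 : ℝ) ^ (α - 2) * ((n + 2 : ℕ) : ℝ) ^ 2 ≤ ((n + 2 : ℕ) : ℝ) ^ α := by
    rw [← Nat.sub_add_cancel hα2, pow_add _ (α - 2) 2, Nat.sub_add_cancel hα2]
    gcongr
    simp
  rw [div_mul_div_comm, one_mul]
  refine one_div_le_one_div_of_le (by positivity) ?_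
  calc 2 ^ (α - 2) * t ^ α * ((n + 2 : ℕ) : ℝ) ^ 2
      = t ^ α * (2 ^ (α - 2) * ((n + 2 : ℕ) : ℝ) ^ 2) := by ring
    _ ≤ t ^ α * ((n + 2 : ℕ) : ℝ) ^ α := by gcongr
    _ ≤ 1 + (t * (n + 2 : ℕ)) ^ α := by rw [mul_pow]; linarith

lemma latticeEnergy_le (hα : Even α) (hα2 : 2 ≤ α) (ht : 0 < t) :
    latticeEnergy α t ≤
      t * (1 + 2 * (profile α t + (π ^ 2 / 6 - 1) / (2 ^ (α - 2) * t ^ α))) := by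
  have hsum := (summable_nat_add_iff 1).2 (summable_profile_nat hα hα2 ht)
  have htail : ∑' n : ℕ, profile α (t * (n + 2 : ℕ)) ≤
      (π ^ 2 / 6 - 1) / (2 ^ (α - 2) * t ^ α) := by
    have hmajor := hasSum_one_div_add_two_sq.mul_left (1 / (2 ^ (α - 2) * t ^ α))
    rw [one_div_mul_eq_div] at hmajor
    rw [← hmajor.tsum_eq]
    exact ((summable_nat_add_iff 1).2 hsum).tsum_le_tsum (profile_mul_add_two_le hα2 ht)
      hmajor.summable
  rw [latticeEnergy_eq hα hα2 ht, hsum.tsum_eq_zero_add, zero_add, Nat.cast_one, mul_one]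
  gcongr

lemma pi_sq_div_six_sub_one_le : π ^ 2 / 6 - 1 ≤ 13 / 20 := by
  nlinarith [pi_pos, pi_lt_d4]

lemma latticeEnergy_four_lt : latticeEnergy 4 (3 / 2) < 21 / 10 := by
  have h := latticeEnergy_le (α := 4) (t := 3 / 2) (by decide) (by decide) (by norm_num)
  norm_num [profile] at h
  linarith [pi_sq_div_six_sub_one_le]

lemma latticeEnergy_six_lt : latticeEnergy 6 (3 / 2) < 9 / 5 := by
  have h := latticeEnergy_le (α := 6) (t := 3 / 2) (by decide) (by decide) (by norm_num)
  norm_num [profile] at h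
  linarith [pi_sq_div_six_sub_one_le]

lemma latticeEnergy_eight_lt : latticeEnergy 8 (4 / 3) < 8 / 5 := by
  have h := latticeEnergy_le (α := 8) (t := 4 / 3) (by decide) (by decide) (by norm_num)
  norm_num [profile] at h
  linarith [pi_sq_div_six_sub_one_le]

lemma latticeEnergy_lt_of_ten_le (hα : Even α) (hα10 : 10 ≤ α) :
    latticeEnergy α (4 / 3) < 149 / 100 := by
  have hprofile : profile α (4 / 3) ≤ 1 / (1 + (4 / 3) ^ 10) :=
    one_div_le_one_div_of_le (by positivity) (by gcongr; norm_num)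
  have htail : (π ^ 2 / 6 - 1) / (2 ^ (α - 2) * (4 / 3) ^ α) ≤
      13 / 20 / (2 ^ 8 * (4 / 3) ^ 10) := by
    gcongr
    · exact pi_sq_div_six_sub_one_le
    · norm_num
    · omega
    · norm_num
  have h := latticeEnergy_le hα (by omega : 2 ≤ α) (by norm_num : (0 : ℝ) < 4 / 3)
  norm_num at h hprofile htail
  linarith

end UpperBound

section SmallDilation

open MeasureTheory Set

variable {α : ℕ} {t : ℝ}

lemma antitoneOn_profile (hα : Even α) : AntitoneOn (profile α) (Ici 0) :=
  fun _ hx _ hy hxy => profile_le_profile hα <| by rwa [abs_of_nonneg hx, abs_of_nonneg hy]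

lemma integrableOn_profile (hα : Even α) (hα2 : 2 ≤ α) : IntegrableOn (profile α) (Ioi 0) := by
  refine (antitoneOn_profile hα).integrableOn_Ioi_zero_of_summable ?_
    fun x _ => (profile_pos hα x).le
  simpa only [one_mul] using summable_profile_nat hα hα2 one_pos

lemma pow_sub_two_mul_profile (hα2 : 2 ≤ α) {x : ℝ} (hx : 0 < x) :
    x ^ (α - 2) * profile α x = x ^ (-2 : ℝ) * profile α x⁻¹ := by
  obtain ⟨k, rfl⟩ := Nat.exists_eq_add_of_le' hα2
  rw [rpow_neg hx.le, rpow_two, profile, profile, Nat.add_sub_cancel, inv_pow, pow_add]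
  field_simp
  ring

lemma integral_pow_sub_two_mul_profile (hα2 : 2 ≤ α) :
    ∫ x in Ioi 0, x ^ (α - 2) * profile α x = ∫ x in Ioi 0, profile α x := by
  rw [← integral_comp_rpow_Ioi (profile α) (by norm_num : (-1 : ℝ) ≠ 0)]
  refine setIntegral_congr_fun measurableSet_Ioi fun x hx => ?_
  norm_num [pow_sub_two_mul_profile hα2 hx, rpow_neg_one]

lemma integrableOn_pow_sub_two_mul_profile (hα : Even α) (hα2 : 2 ≤ α) :
    IntegrableOn (fun x => x ^ (α - 2) * profile α x) (Ioi 0) := by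
  refine ((integrableOn_Ioi_comp_rpow_iff (profile α) (by norm_num : (-1 : ℝ) ≠ 0)).2
    (integrableOn_profile hα hα2)).congr_fun (fun x hx => ?_) measurableSet_Ioi
  norm_num [pow_sub_two_mul_profile hα2 hx, rpow_neg_one]

lemma one_le_profile_add_pow_mul {x : ℝ} (hα : Even α) (hx0 : 0 ≤ x) (hx1 : x ≤ 1) :
    1 ≤ profile α x + x ^ (α - 2) * profile α x := by
  rw [← one_add_mul, profile, mul_one_div, one_le_div (one_add_pow_pos hα x)]
  gcongr 1 + ?_
  exact pow_le_pow_of_le_one hx0 hx1 (Nat.sub_le α 2)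

lemma rpow_neg_two_le_profile_add_pow_mul {x : ℝ} (hα2 : 2 ≤ α) (hx : 1 ≤ x) :
    x ^ (-2 : ℝ) ≤ profile α x + x ^ (α - 2) * profile α x := by
  have hx0 : 0 < x := one_pos.trans_le hx
  rw [← one_add_mul, profile, mul_one_div, rpow_neg hx0.le, rpow_two,
    inv_le_comm₀ (by positivity) (by positivity), inv_div, div_le_iff₀ (by positivity), mul_add,
    ← pow_add, Nat.add_sub_cancel' hα2, mul_one]
  gcongr
  exact one_le_pow₀ hx

/-- The symmetry `x ↦ 1 / x` shows that twice the integral is that of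
`(1 + x ^ (α - 2)) / (1 + x ^ α)`, which is at least `min 1 (x ^ (-2))`. -/
lemma one_le_integral_profile (hα : Even α) (hα2 : 2 ≤ α) :
    1 ≤ ∫ x in Ioi 0, profile α x := by
  have hint := (integrableOn_profile hα hα2).add (integrableOn_pow_sub_two_mul_profile hα hα2)
  have htwo : ∫ x in Ioi 0, (profile α x + x ^ (α - 2) * profile α x) =
      2 * ∫ x in Ioi 0, profile α x := by
    rw [integral_add (integrableOn_profile hα hα2) (integrableOn_pow_sub_two_mul_profile hα hα2),
      integral_pow_sub_two_mul_profile hα2, two_mul]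
  have hleft : 1 ≤ ∫ x in Ioc 0 1, (profile α x + x ^ (α - 2) * profile α x) := by
    calc (1 : ℝ) = ∫ _ in Ioc (0 : ℝ) 1, (1 : ℝ) := by simp
      _ ≤ _ := setIntegral_mono_on (integrableOn_const (by simp))
        (hint.mono_set Ioc_subset_Ioi_self) measurableSet_Ioc
        fun x hx => one_le_profile_add_pow_mul hα hx.1.le hx.2
  have hright : 1 ≤ ∫ x in Ioi 1, (profile α x + x ^ (α - 2) * profile α x) := by
    calc (1 : ℝ) = ∫ x in Ioi (1 : ℝ), x ^ (-2 : ℝ) := by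
          rw [integral_Ioi_rpow_of_lt (by norm_num) one_pos]; norm_num
      _ ≤ _ := setIntegral_mono_on (integrableOn_Ioi_rpow_of_lt (by norm_num) one_pos)
        (hint.mono_set (Ioi_subset_Ioi zero_le_one)) measurableSet_Ioi
        fun x hx => rpow_neg_two_le_profile_add_pow_mul hα2 (mem_Ioi.1 hx).le
  have hsplit := setIntegral_union (Ioc_disjoint_Ioi_same (a := (0 : ℝ)) (b := 1))
    measurableSet_Ioi (hint.mono_set Ioc_subset_Ioi_self)
    (hint.mono_set (Ioi_subset_Ioi zero_le_one))
  rw [Ioc_union_Ioi_eq_Ioi zero_le_one] at hsplit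
  simp only [Pi.add_apply] at hsplit
  linarith

lemma two_sub_le_latticeEnergy (hα : Even α) (hα2 : 2 ≤ α) (ht : 0 < t) :
    2 - t ≤ latticeEnergy α t := by
  have hanti : AntitoneOn (fun x => profile α (t * x)) (Ici 0) := fun x hx y hy hxy =>
    antitoneOn_profile hα (mul_nonneg ht.le hx) (mul_nonneg ht.le hy) (by gcongr)
  have hsum := summable_profile_nat hα hα2 ht
  have hriemann : 1 ≤ t * ∑' n : ℕ, profile α (t * n) := by
    calc 1 ≤ ∫ x in Ioi 0, profile α x := one_le_integral_profile hα hα2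
      _ = t * ∫ x in Ioi 0, profile α (t * x) := by
        rw [integral_comp_mul_left_Ioi _ _ ht, mul_zero, smul_eq_mul, mul_inv_cancel_left₀ ht.ne']
      _ ≤ t * ∑' n : ℕ, profile α (t * n) := by
        gcongr
        exact hanti.integral_le_tsum hsum fun x _ => (profile_pos hα _).le
  rw [hsum.tsum_eq_zero_add, Nat.cast_zero, mul_zero, profile_zero (by omega)] at hriemann
  rw [latticeEnergy_eq hα hα2 ht]
  linarith

/-- The terms `n = 0, ±1` alone contribute `t + 2 * t * profile α t`. -/
lemma one_add_le_latticeEnergy (hα : Even α) (hα2 : 2 ≤ α) (ht : 0 < t)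
    (h : t ^ α ≤ 2 * t - 1) : 1 + t ≤ latticeEnergy α t := by
  have hfirst : profile α t ≤ ∑' n : ℕ, profile α (t * (n + 1 : ℕ)) := by
    have hsum := (summable_nat_add_iff 1).2 (summable_profile_nat hα hα2 ht)
    simpa using hsum.le_tsum 0 fun n _ => (profile_pos hα _).le
  have hone : 1 ≤ 2 * t * profile α t := by
    rw [profile, mul_one_div, one_le_div (by positivity)]
    linarith
  rw [latticeEnergy_eq hα hα2 ht]
  nlinarith

lemma pow_ten_le_two_mul_sub_one (ht : 51 / 100 ≤ t) (ht1 : t ≤ 1) : t ^ 10 ≤ 2 * t - 1 := by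
  have hgeom : 2 ≤ ∑ k ∈ Finset.range 10, t ^ k := by
    calc (2 : ℝ) ≤ ∑ k ∈ Finset.range 10, (51 / 100) ^ k := by norm_num [Finset.sum_range_succ]
      _ ≤ ∑ k ∈ Finset.range 10, t ^ k := by gcongr
  have h := mul_geom_sum t 10
  nlinarith

lemma le_latticeEnergy_of_ten_le (hα : Even α) (hα10 : 10 ≤ α) (ht : 0 < t) (ht1 : t ≤ 1) :
    149 / 100 ≤ latticeEnergy α t := by
  have hα2 : 2 ≤ α := by omega
  rcases le_total t (51 / 100) with h | h
  · linarith [two_sub_le_latticeEnergy hα hα2 ht]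
  · have hpow : t ^ α ≤ 2 * t - 1 :=
      (pow_le_pow_of_le_one ht.le ht1 hα10).trans (pow_ten_le_two_mul_sub_one h ht1)
    linarith [one_add_le_latticeEnergy hα hα2 ht hpow]

end SmallDilation

section Cotangent

open Complex (I)
open scoped Nat

lemma hasSum_sq_div_sq_sub_sq {z : ℂ} (hz : z ∈ Complex.integerComplement) :
    HasSum (fun n : ℕ => z ^ 2 / (z ^ 2 - (n + 1 : ℕ) ^ 2))
      ((π * z * Complex.cot (π * z) - 1) / 2) := by
  have hz0 : z ≠ 0 := Complex.integerComplement.ne_zero hz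
  have h := (summable_cotTerm hz).hasSum
  rw [← cot_series_rep' hz] at h
  convert! h.mul_left (z / 2) using 1
  · funext n
    have hsub : z ^ 2 - ((n : ℂ) + 1) ^ 2 = (z + (n + 1)) * (z - (n + 1)) := by ring
    rw [cotTerm_identity hz, Nat.cast_succ, hsub]
    ring
  · field_simp

lemma re_pi_mul_cot_ge {z : ℂ} (hz : 0 < z.im) :
    π * (z.im - 2 * ‖z‖ / (exp (2 * π * z.im) - 1)) ≤ (π * z * Complex.cot (π * z)).re := by
  set q : ℂ := Complex.exp (2 * π * I * z) with hq
  have hnorm : ‖q‖ = (exp (2 * π * z.im))⁻¹ := by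
    rw [hq, Complex.norm_exp, ← exp_neg]
    simp
  have hexp : 1 < exp (2 * π * z.im) := one_lt_exp_iff.2 (by positivity)
  have hnorm_lt : ‖q‖ < 1 := hnorm ▸ inv_lt_one_of_one_lt₀ hexp
  have hq1 : 1 - q ≠ 0 := sub_ne_zero.2 fun h => by simp [← h] at hnorm_lt
  have hcot : π * z * Complex.cot (π * z) = -(π * z * I) - 2 * π * z * I * (q / (1 - q)) := by
    rw [Complex.cot_pi_eq_exp_ratio, ← hq]
    field_simp
    linear_combination z * (1 + q) * Complex.I_sq
  have herror : ‖2 * π * z * I * (q / (1 - q))‖ ≤ π * (2 * ‖z‖ / (exp (2 * π * z.im) - 1)) := by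
    have hden : 1 - ‖q‖ ≤ ‖1 - q‖ := by simpa using norm_sub_norm_le 1 q
    calc ‖2 * π * z * I * (q / (1 - q))‖ = 2 * π * ‖z‖ * (‖q‖ / ‖1 - q‖) := by
          simp [abs_of_pos pi_pos]
      _ ≤ 2 * π * ‖z‖ * (‖q‖ / (1 - ‖q‖)) := by
          gcongr
      _ = π * (2 * ‖z‖ / (exp (2 * π * z.im) - 1)) := by
          have := (sub_pos.2 hexp).ne'
          rw [hnorm]
          field_simp
  have hre : (-(π * z * I)).re = π * z.im := by simp
  rw [hcot, Complex.sub_re, hre]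
  linarith [Complex.re_le_norm (2 * π * z * I * (q / (1 - q)))]

/-- The real part of `w² / (w² - x²)`. Its sums over lattices are cotangents, and
`profile α` is an average of such kernels with `w` on the unit circle. -/
noncomputable def cotKernel (w : ℂ) (x : ℝ) : ℝ := (w ^ 2 / (w ^ 2 - x ^ 2)).re

/-- A lower bound for the energy of `cotKernel w` at every dilation `t ≤ 1`, where `‖w‖ = 1`
and `σ = w.im`. -/
noncomputable def cotBound (σ : ℝ) : ℝ := π * (σ - 2 / (exp (2 * π * σ) - 1))

variable {w : ℂ} {t : ℝ}

lemma hasSum_cotKernel (hw : 0 < w.im) (ht : 0 < t) :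
    HasSum (fun n : ℕ => cotKernel w (t * (n + 1 : ℕ)))
      (((π * (w / t) * Complex.cot (π * (w / t))).re - 1) / 2) := by
  have him : 0 < (w / t).im := by rw [Complex.div_ofReal_im]; positivity
  have h := Complex.hasSum_re (hasSum_sq_div_sq_sub_sq
    (UpperHalfPlane.coe_mem_integerComplement ⟨w / t, him⟩))
  convert h using 1
  · funext n
    have ht0 : (t : ℂ) ≠ 0 := Complex.ofReal_ne_zero.2 ht.ne'
    rw [cotKernel, ← mul_div_mul_right (w ^ 2) _ (inv_ne_zero (pow_ne_zero 2 ht0))]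
    congr 2
    · simp only [div_eq_mul_inv]; ring
    · push_cast; field_simp
  · simp

lemma cotBound_le (hw : ‖w‖ = 1) (him : 0 < w.im) (ht : 0 < t) (ht1 : t ≤ 1) :
    cotBound w.im ≤ t * (1 + 2 * ∑' n : ℕ, cotKernel w (t * (n + 1 : ℕ))) := by
  have hσ : w.im ≤ w.im / t := le_div_self him.le ht ht1
  have him_div : (w / t).im = w.im / t := Complex.div_ofReal_im w t
  have hexp : 1 < exp (2 * π * w.im) := one_lt_exp_iff.2 (by positivity)
  have h := re_pi_mul_cot_ge (z := w / t) (by rw [him_div]; positivity)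
  rw [him_div, norm_div, hw, Complex.norm_of_nonneg ht.le] at h
  rw [(hasSum_cotKernel him ht).tsum_eq, mul_div_cancel₀ _ two_ne_zero, add_sub_cancel]
  calc cotBound w.im ≤ π * (w.im - 2 / (exp (2 * π * (w.im / t)) - 1)) := by
        rw [cotBound]
        gcongr
    _ = t * (π * (w.im / t - 2 * (1 / t) / (exp (2 * π * (w.im / t)) - 1))) := by field_simp
    _ ≤ _ := by gcongr

lemma cotKernel_exp (θ x : ℝ) :
    cotKernel (Complex.exp (θ * I)) x =
      (1 - cos (2 * θ) * x ^ 2) / (1 - 2 * cos (2 * θ) * x ^ 2 + x ^ 4) := by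
  have hsq : Complex.exp (θ * I) ^ 2 = ⟨cos (2 * θ), sin (2 * θ)⟩ := by
    rw [← Complex.exp_nat_mul]
    apply Complex.ext <;> simp [Complex.exp_re, Complex.exp_im]
  have hunit := cos_sq_add_sin_sq (2 * θ)
  rw [cotKernel, hsq, ← Complex.ofReal_pow, Complex.div_re, ← add_div]
  have hden : Complex.normSq (⟨cos (2 * θ), sin (2 * θ)⟩ - ((x ^ 2 : ℝ) : ℂ)) =
      1 - 2 * cos (2 * θ) * x ^ 2 + x ^ 4 := by
    rw [Complex.normSq_apply]
    simp only [Complex.sub_re, Complex.sub_im, Complex.ofReal_re, Complex.ofReal_im]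
    linear_combination hunit
  rw [hden]
  congr 1
  simp only [Complex.sub_re, Complex.sub_im, Complex.ofReal_re, Complex.ofReal_im]
  linear_combination hunit

lemma sum_cotBound_le_latticeEnergy {ι : Type*} [Fintype ι] {α : ℕ} (hα : Even α) (hα2 : 2 ≤ α)
    {c θ : ι → ℝ} (hc : ∀ i, 0 ≤ c i) (hc1 : ∑ i, c i = 1) (hθ : ∀ i, 0 < sin (θ i))
    (h : ∀ x, profile α x = ∑ i, c i * cotKernel (Complex.exp (θ i * I)) x)
    (ht : 0 < t) (ht1 : t ≤ 1) :
    ∑ i, c i * cotBound (sin (θ i)) ≤ latticeEnergy α t := by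
  have him : ∀ i, (Complex.exp (θ i * I)).im = sin (θ i) := fun i => Complex.exp_ofReal_mul_I_im _
  have hsum : ∀ i, HasSum (fun n : ℕ => cotKernel (Complex.exp (θ i * I)) (t * (n + 1 : ℕ))) _ :=
    fun i => hasSum_cotKernel (by rw [him]; exact hθ i) ht
  have htsum : ∑' n : ℕ, profile α (t * (n + 1 : ℕ)) =
      ∑ i, c i * ∑' n : ℕ, cotKernel (Complex.exp (θ i * I)) (t * (n + 1 : ℕ)) := by
    simp only [h, ← tsum_mul_left]
    exact Summable.tsum_finsetSum fun i _ => (hsum i).summable.mul_left _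
  calc ∑ i, c i * cotBound (sin (θ i))
      ≤ ∑ i, c i * (t * (1 + 2 * ∑' n : ℕ,
          cotKernel (Complex.exp (θ i * I)) (t * (n + 1 : ℕ)))) := by
        gcongr with i
        · exact hc i
        · rw [← him]
          exact cotBound_le (Complex.norm_exp_ofReal_mul_I _) (by rw [him]; exact hθ i) ht ht1
    _ = t * (∑ i, c i + 2 * ∑ i, c i * ∑' n : ℕ,
          cotKernel (Complex.exp (θ i * I)) (t * (n + 1 : ℕ))) := by
        rw [Finset.mul_sum, ← Finset.sum_add_distrib, Finset.mul_sum]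
        exact Finset.sum_congr rfl fun i _ => by ring
    _ = latticeEnergy α t := by rw [latticeEnergy_eq hα hα2 ht, htsum, hc1]

lemma le_cotBound {a b σ : ℝ} (ha : 0 < a) (haσ : a ≤ σ) (hb : 0 ≤ b)
    (h : b + 2 / (∑ k ∈ Finset.range 12, (6 * a) ^ k / (k ! : ℝ) - 1) ≤ a) :
    3.1415 * b ≤ cotBound σ := by
  have hsum : 1 < ∑ k ∈ Finset.range 12, (6 * a) ^ k / k ! := by
    rw [Finset.sum_range_succ']
    have : 0 < ∑ k ∈ Finset.range 11, (6 * a) ^ (k + 1) / (k + 1)! :=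
      Finset.sum_pos (fun _ _ => by positivity) (by simp)
    simpa using this
  have hexp : ∑ k ∈ Finset.range 12, (6 * a) ^ k / k ! ≤ exp (2 * π * σ) := by
    refine (sum_le_exp_of_nonneg (by positivity) 12).trans (exp_le_exp.2 ?_)
    nlinarith [pi_gt_three]
  have herror : 2 / (exp (2 * π * σ) - 1) ≤
      2 / (∑ k ∈ Finset.range 12, (6 * a) ^ k / (k ! : ℝ) - 1) := by
    gcongr
  rw [cotBound]
  gcongr
  · exact pi_gt_d4.le
  · linarith

end Cotangent

section Minimizer

open Complex (I)

lemma profile_four (x : ℝ) : profile 4 x = cotKernel (Complex.exp ((π / 4 : ℝ) * I)) x := by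
  have hcos : cos (2 * (π / 4)) = 0 := by rw [← cos_pi_div_two]; ring_nf
  rw [cotKernel_exp, hcos, profile]
  ring

lemma profile_six (x : ℝ) :
    profile 6 x = 1 / 3 * cotKernel (Complex.exp ((π / 2 : ℝ) * I)) x +
      2 / 3 * cotKernel (Complex.exp ((π / 6 : ℝ) * I)) x := by
  have hcos₁ : cos (2 * (π / 2)) = -1 := by rw [mul_div_cancel₀ _ two_ne_zero, cos_pi]
  have hcos₂ : cos (2 * (π / 6)) = 1 / 2 := by rw [← cos_pi_div_three]; ring_nf
  have hden₁ : 0 < 1 + 2 * x ^ 2 + x ^ 4 := by positivity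
  have hden₂ : 0 < 1 - x ^ 2 + x ^ 4 := by nlinarith [sq_nonneg (x ^ 2 - 1)]
  rw [cotKernel_exp, cotKernel_exp, hcos₁, hcos₂, profile]
  norm_num
  field_simp
  ring

lemma profile_eight (x : ℝ) :
    profile 8 x = 1 / 2 * cotKernel (Complex.exp ((π / 8 : ℝ) * I)) x +
      1 / 2 * cotKernel (Complex.exp ((3 * π / 8 : ℝ) * I)) x := by
  have hcos₁ : cos (2 * (π / 8)) = √2 / 2 := by rw [← cos_pi_div_four]; ring_nf
  have hcos₂ : cos (2 * (3 * π / 8)) = -(√2 / 2) := by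
    rw [← cos_pi_div_four, ← cos_pi_sub]; ring_nf
  have hsqrt : √2 ^ 2 = 2 := sq_sqrt zero_le_two
  have hfactor : 1 + x ^ 8 = (1 - √2 * x ^ 2 + x ^ 4) * (1 + √2 * x ^ 2 + x ^ 4) := by
    linear_combination x ^ 4 * hsqrt
  have hden₁ : 1 - √2 * x ^ 2 + x ^ 4 ≠ 0 := by
    refine left_ne_zero_of_mul (b := 1 + √2 * x ^ 2 + x ^ 4) ?_
    rw [← hfactor]
    positivity
  have hden₂ : 1 + √2 * x ^ 2 + x ^ 4 ≠ 0 := by positivity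
  rw [cotKernel_exp, cotKernel_exp, hcos₁, hcos₂, profile, hfactor, mul_neg, neg_mul,
    sub_neg_eq_add, mul_div_cancel₀ _ two_ne_zero, neg_mul, sub_neg_eq_add, ← mul_add,
    div_add_div _ _ hden₁ hden₂, ← mul_div_assoc]
  congr 1
  linear_combination x ^ 4 / 2 * hsqrt

lemma le_latticeEnergy_four {t : ℝ} (ht : 0 < t) (ht1 : t ≤ 1) :
    21 / 10 ≤ latticeEnergy 4 t := by
  have hsin : 0.707 ≤ sin (π / 4) := by
    rw [sin_pi_div_four]
    linarith [le_sqrt_of_sq_le (by norm_num : (1.414 : ℝ) ^ 2 ≤ 2)]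
  have hbound := le_cotBound (b := 0.674) (by norm_num) hsin (by norm_num)
    (by norm_num [Finset.sum_range_succ, Nat.factorial])
  have hsum := sum_cotBound_le_latticeEnergy (α := 4) (c := fun _ : Unit => 1) (θ := fun _ => π / 4)
    (by decide) (by decide) (by simp) (by simp) (by simp) (by simpa using profile_four) ht ht1
  rw [Fintype.sum_unique, one_mul] at hsum
  linarith

lemma le_latticeEnergy_six {t : ℝ} (ht : 0 < t) (ht1 : t ≤ 1) :
    9 / 5 ≤ latticeEnergy 6 t := by
  have hbound₁ := le_cotBound (a := 1) (b := 0.99) (σ := sin (π / 2)) (by norm_num) (by simp)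
    (by norm_num) (by norm_num [Finset.sum_range_succ, Nat.factorial])
  have hbound₂ := le_cotBound (a := 1 / 2) (b := 0.39) (σ := sin (π / 6)) (by norm_num)
    (by simp) (by norm_num) (by norm_num [Finset.sum_range_succ, Nat.factorial])
  have hsum := sum_cotBound_le_latticeEnergy (α := 6) (c := ![1 / 3, 2 / 3]) (θ := ![π / 2, π / 6])
    (by decide) (by decide) (by norm_num [Fin.forall_fin_two])
    (by norm_num [Fin.sum_univ_two]) (by simp [Fin.forall_fin_two])
    (by simpa [Fin.sum_univ_two] using profile_six) ht ht1
  simp only [Fin.sum_univ_two, Matrix.cons_val_zero, Matrix.cons_val_one] at hsum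
  linarith

lemma le_latticeEnergy_eight {t : ℝ} (ht : 0 < t) (ht1 : t ≤ 1) :
    8 / 5 ≤ latticeEnergy 8 t := by
  have hsqrt : (1.414 : ℝ) ≤ √2 ∧ √2 ≤ 1.415 :=
    ⟨le_sqrt_of_sq_le (by norm_num), sqrt_le_iff.2 (by norm_num)⟩
  have hsin₁ : 0.38 ≤ sin (π / 8) := by
    rw [sin_pi_div_eight, le_div_iff₀ two_pos]
    exact le_sqrt_of_sq_le (by linarith [hsqrt.2])
  have hsin₂ : 0.92 ≤ sin (3 * π / 8) := by
    rw [show 3 * π / 8 = π / 2 - π / 8 by ring, sin_pi_div_two_sub, cos_pi_div_eight,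
      le_div_iff₀ two_pos]
    exact le_sqrt_of_sq_le (by linarith [hsqrt.1])
  have hbound₁ := le_cotBound (b := 0.15) (by norm_num) hsin₁ (by norm_num)
    (by norm_num [Finset.sum_range_succ, Nat.factorial])
  have hbound₂ := le_cotBound (b := 0.9) (by norm_num) hsin₂ (by norm_num)
    (by norm_num [Finset.sum_range_succ, Nat.factorial])
  have hsum := sum_cotBound_le_latticeEnergy (α := 8) (c := ![1 / 2, 1 / 2])
    (θ := ![π / 8, 3 * π / 8]) (by decide) (by decide) (by norm_num [Fin.forall_fin_two])
    (by norm_num [Fin.sum_univ_two])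
    (Fin.forall_fin_two.2 ⟨lt_of_lt_of_le (by norm_num) hsin₁,
      lt_of_lt_of_le (by norm_num) hsin₂⟩)
    (by simpa [Fin.sum_univ_two] using profile_eight) ht ht1
  simp only [Fin.sum_univ_two, Matrix.cons_val_zero, Matrix.cons_val_one] at hsum
  linarith

lemma exists_latticeEnergy_lt {α : ℕ} (hα : Even α) (hα4 : 4 ≤ α) :
    ∃ t, 0 < t ∧ ∀ u, 0 < u → u ≤ 1 → latticeEnergy α t < latticeEnergy α u := by
  rcases le_or_gt 10 α with hα10 | hα10
  · exact ⟨4 / 3, by norm_num, fun u hu hu1 =>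
      (latticeEnergy_lt_of_ten_le hα hα10).trans_le (le_latticeEnergy_of_ten_le hα hα10 hu hu1)⟩
  · have hα468 : α = 4 ∨ α = 6 ∨ α = 8 := by
      obtain ⟨k, rfl⟩ := hα
      omega
    rcases hα468 with rfl | rfl | rfl
    · exact ⟨3 / 2, by norm_num, fun u hu hu1 =>
        latticeEnergy_four_lt.trans_le (le_latticeEnergy_four hu hu1)⟩
    · exact ⟨3 / 2, by norm_num, fun u hu hu1 =>
        latticeEnergy_six_lt.trans_le (le_latticeEnergy_six hu hu1)⟩
    · exact ⟨4 / 3, by norm_num, fun u hu hu1 =>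
        latticeEnergy_eight_lt.trans_le (le_latticeEnergy_eight hu hu1)⟩

variable {α : ℕ} {s : ℝ}

lemma one_lt_of_forall_latticeEnergy_le (hα : Even α) (hα4 : 4 ≤ α) (hs : 0 < s)
    (hmin : ∀ t, 0 < t → latticeEnergy α s ≤ latticeEnergy α t) : 1 < s := by
  obtain ⟨t, ht, hlt⟩ := exists_latticeEnergy_lt hα hα4
  by_contra! hs1
  exact (hlt s hs hs1).not_ge (hmin t ht)

lemma hasDerivAt_mul_profile (hα : Even α) (x t : ℝ) :
    HasDerivAt (fun t => t * profile α (t * x))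
      (profile α (t * x) + t * x * deriv (profile α) (t * x)) t := by
  have hprofile : HasDerivAt (profile α) (deriv (profile α) (t * x)) (t * x) :=
    (differentiable_profile hα _).hasDerivAt
  refine ((hasDerivAt_id t).mul (hprofile.comp t (hasDerivAt_mul_const x))).congr_deriv ?_
  simp only [id_eq, Function.comp_apply]
  ring

lemma hasDerivAt_latticeEnergy (hα : Even α) (hα2 : 2 ≤ α) (hs : 0 < s) :
    HasDerivAt (latticeEnergy α)
      (∑' n : ℤ, (profile α (s * n) + s * n * deriv (profile α) (s * n))) s := by
  have hs2 : s ∈ Set.Ioi (s / 2) := half_lt_self hs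
  refine hasDerivAt_tsum_of_isPreconnected (t := Set.Ioi (s / 2)) (y₀ := s)
    (u := fun n : ℤ => (1 + α) * profile α (s / 2 * n))
    ((summable_profile_int hα hα2 (half_pos hs)).mul_left _) isOpen_Ioi isPreconnected_Ioi
    (fun n t _ => hasDerivAt_mul_profile hα n t) (fun n t ht => ?_) hs2
    ((summable_profile_int hα hα2 hs).mul_left s) hs2
  have ht' : s / 2 ≤ t := le_of_lt ht
  have hle : profile α (t * n) ≤ profile α (s / 2 * n) := by
    refine profile_le_profile hα ?_
    rw [abs_mul, abs_mul, abs_of_pos (half_pos hs), abs_of_pos ((half_pos hs).trans_le ht')]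
    gcongr
  calc ‖profile α (t * n) + t * n * deriv (profile α) (t * n)‖
      ≤ profile α (t * n) + α * profile α (t * n) := by
        refine (norm_add_le _ _).trans (add_le_add ?_ (abs_mul_deriv_profile_le hα _))
        rw [norm_of_nonneg (profile_pos hα _).le]
    _ = (1 + α) * profile α (t * n) := by ring
    _ ≤ (1 + α) * profile α (s / 2 * n) := by gcongr

lemma tsum_profile_add_mul_deriv_eq_zero (hα : Even α) (hα2 : 2 ≤ α) (hs : 0 < s)
    (hmin : ∀ t, 0 < t → latticeEnergy α s ≤ latticeEnergy α t) :
    ∑' n : ℤ, (profile α (s * n) + s * n * deriv (profile α) (s * n)) = 0 := by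
  refine IsLocalMin.hasDerivAt_eq_zero ?_ (hasDerivAt_latticeEnergy hα hα2 hs)
  filter_upwards [Ioi_mem_nhds hs] with t ht using hmin t ht

end Minimizer

section FirstValue

variable {α : ℕ} {s t : ℝ}

lemma le_abs_mul_intCast (ht : 0 ≤ t) {n : ℤ} (hn : n ≠ 0) : t ≤ |t * n| := by
  rw [abs_mul, abs_of_nonneg ht]
  exact le_mul_of_one_le_right ht (by exact_mod_cast Int.one_le_abs hn)

lemma summable_mul_deriv_profile (hα : Even α) (hα2 : 2 ≤ α) (ht : 0 < t) :
    Summable fun n : ℤ => t * n * deriv (profile α) (t * n) :=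
  Summable.of_norm_bounded ((summable_profile_int hα hα2 ht).mul_left (α : ℝ))
    fun _ => abs_mul_deriv_profile_le hα _

lemma profile_add_mul_deriv_nonpos (hα : Even α) (hα2 : 2 ≤ α) {x : ℝ} (hx : 1 ≤ |x|) :
    profile α x + x * deriv (profile α) x ≤ 0 := by
  have hα2' : (2 : ℝ) ≤ α := by exact_mod_cast hα2
  have hfactor : 1 ≤ α * (1 - profile α x) := by nlinarith [profile_le_half hα hx]
  rw [mul_deriv_profile hα]
  nlinarith [profile_pos hα x]

lemma two_mul_profile_mul_le_one (hα : Even α) (hα2 : 2 ≤ α) (hs : 1 ≤ s)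
    (hzero : ∑' n : ℤ, (profile α (s * n) + s * n * deriv (profile α) (s * n)) = 0) :
    2 * (profile α s * (α * (1 - profile α s) - 1)) ≤ 1 := by
  have hs0 : 0 < s := zero_lt_one.trans_le hs
  have hsum := (summable_profile_int hα hα2 hs0).add (summable_mul_deriv_profile hα hα2 hs0)
  have hpartial := hsum.neg.sum_le_tsum {0, 1, -1} fun n hn => by
    have hn0 : n ≠ 0 := by rintro rfl; simp at hn
    exact neg_nonneg.2 (profile_add_mul_deriv_nonpos hα hα2
      (hs.trans (le_abs_mul_intCast hs0.le hn0)))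
  rw [tsum_neg, hzero, Finset.sum_insert (by decide), Finset.sum_insert (by decide),
    Finset.sum_singleton] at hpartial
  simp only [mul_deriv_profile hα, Int.cast_zero, Int.cast_one, Int.cast_neg, mul_neg, mul_one,
    mul_zero, profile_neg hα, profile_zero (by omega : α ≠ 0)] at hpartial
  linarith

lemma three_le_mul_one_sub_profile (hα : Even α) (hα4 : 4 ≤ α) (hs : 1 < s)
    (hzero : ∑' n : ℤ, (profile α (s * n) + s * n * deriv (profile α) (s * n)) = 0) :
    3 ≤ α * (1 - profile α s) := by
  have hquad := two_mul_profile_mul_le_one hα (by omega) hs.le hzero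
  have hhalf : profile α s < 1 / 2 := by
    rw [profile]
    gcongr
    linarith [one_lt_pow₀ hs (by omega : α ≠ 0)]
  have hα4' : (4 : ℝ) ≤ α := by exact_mod_cast hα4
  by_contra! hlt
  -- For `α = 4` the quadratic inequality reads `(1 - 2 p) * (1 - 4 p) ≥ 0` with `p < 1 / 2`.
  have h := mul_pos (sub_pos.2 hlt) (by linarith : 0 < 1 - 2 * profile α s)
  nlinarith

end FirstValue

section Positivity

lemma two_sub_two_mul_cos_sub_mul_sin_nonneg {x : ℝ} (hx : x ∈ Set.Ioo 0 π) :
    0 ≤ 2 - 2 * cos x - x * sin x := by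
  obtain ⟨y, rfl⟩ : ∃ y, x = 2 * y := ⟨x / 2, by ring⟩
  have hy0 : 0 < y := by linarith [hx.1]
  have hy1 : y < π / 2 := by linarith [hx.2]
  have hcos : 0 < cos y := cos_pos_of_mem_Ioo ⟨by linarith, hy1⟩
  have hsin : 0 < sin y := sin_pos_of_pos_of_lt_pi hy0 (by linarith)
  have htan : y * cos y < sin y := by
    rw [← lt_div_iff₀ hcos, ← tan_eq_sin_div_cos]
    exact lt_tan hy0 hy1
  calc 0 ≤ 4 * (sin y * (sin y - y * cos y)) := by have := sub_pos.2 htan; positivity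
    _ = 2 - 2 * cos (2 * y) - 2 * y * sin (2 * y) := by
      rw [cos_two_mul, sin_two_mul]
      linear_combination 4 * sin_sq_add_cos_sq y

/-- The Cusa–Huygens inequality `3 sin x ≤ x (2 + cos x)`. -/
lemma mul_one_sub_cos_le {x : ℝ} (hx : 0 ≤ x) : x * (1 - cos x) ≤ 3 * (x - sin x) := by
  rcases le_or_gt 3 x with hx3 | hx3
  · nlinarith [neg_one_le_cos x, sin_le_one x]
  · have hderiv (y : ℝ) : HasDerivAt (fun y => 3 * (y - sin y) - y * (1 - cos y))
        (2 - 2 * cos y - y * sin y) y := by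
      refine ((((hasDerivAt_id y).sub (hasDerivAt_sin y)).const_mul 3).sub
        ((hasDerivAt_id y).mul ((hasDerivAt_cos y).const_sub 1))).congr_deriv ?_
      simp only [id_eq]
      ring
    have hmono : MonotoneOn (fun y => 3 * (y - sin y) - y * (1 - cos y)) (Set.Icc 0 3) := by
      refine monotoneOn_of_hasDerivWithinAt_nonneg (convex_Icc 0 3)
        (fun y _ => (hderiv y).continuousAt.continuousWithinAt)
        (fun y _ => (hderiv y).hasDerivWithinAt) fun y hy => ?_
      rw [interior_Icc] at hy
      exact two_sub_two_mul_cos_sub_mul_sin_nonneg ⟨hy.1, hy.2.trans pi_gt_three⟩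
    have h := hmono ⟨le_rfl, zero_le_three⟩ ⟨hx, hx3.le⟩ hx
    simp only [sin_zero, sub_self, mul_zero, zero_mul] at h
    linarith

lemma mul_one_sub_cos_mul_le {θ m : ℝ} (hθ : 0 ≤ θ) (hm : m ≠ 0) :
    θ * (1 - cos (m * θ)) ≤ 3 * (θ - sin (m * θ) / m) := by
  wlog hpos : 0 < m generalizing m
  · have h := this (neg_ne_zero.2 hm) (neg_pos.2 (lt_of_le_of_ne (not_lt.1 hpos) hm))
    rwa [neg_mul, cos_neg, sin_neg, neg_div_neg_eq] at h
  have h := mul_one_sub_cos_le (mul_nonneg hpos.le hθ)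
  refine le_of_mul_le_mul_left ?_ hpos
  calc m * (θ * (1 - cos (m * θ))) ≤ 3 * (m * θ - sin (m * θ)) := by rwa [← mul_assoc]
    _ = m * (3 * (θ - sin (m * θ) / m)) := by field_simp

lemma mul_mul_one_sub_cos_le {f g θ m : ℝ} (hθ : 0 ≤ θ) (hm : m ≠ 0) (hf : 0 ≤ f)
    (hfg : 3 * f ≤ -(m * g)) :
    θ * f * (1 - cos (m * θ)) ≤ g * (sin (m * θ) - m * θ) := by
  have hcusa := mul_one_sub_cos_mul_le hθ hm
  have hgap : 0 ≤ θ - sin (m * θ) / m := by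
    have : 0 ≤ θ * (1 - cos (m * θ)) := mul_nonneg hθ (sub_nonneg.2 (cos_le_one _))
    linarith
  calc θ * f * (1 - cos (m * θ)) = f * (θ * (1 - cos (m * θ))) := by ring
    _ ≤ f * (3 * (θ - sin (m * θ) / m)) := by gcongr
    _ = 3 * f * (θ - sin (m * θ) / m) := by ring
    _ ≤ -(m * g) * (θ - sin (m * θ) / m) := by gcongr
    _ = g * (sin (m * θ) - m * θ) := by
      field_simp
      ring

lemma nonneg_of_tsum_add_mul_eq_zero {F G : ℤ → ℝ} (hF : Summable F)
    (hnG : Summable fun n => n * G n) (hzero : ∑' n, (F n + n * G n) = 0)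
    (hF0 : ∀ n ≠ 0, 0 ≤ F n) (hFG : ∀ n ≠ 0, 3 * F n ≤ -(n * G n)) {ξ : ℝ} (hξ : ξ ≤ 1) :
    0 ≤ (1 - ξ) * ∑' n, F n * cos (2 * π * n * ξ) -
      1 / (2 * π) * ∑' n, G n * sin (2 * π * n * ξ) := by
  have hcos : Summable fun n => F n * cos (2 * π * n * ξ) :=
    Summable.of_norm_bounded hF.norm fun n => by
      rw [norm_mul]
      exact mul_le_of_le_one_right (norm_nonneg _) (abs_cos_le_one _)
  have hsin : Summable fun n => G n * sin (2 * π * n * ξ) :=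
    Summable.of_norm_bounded hnG.norm fun n => by
      rcases eq_or_ne n 0 with rfl | hn
      · simp
      · have hn1 : 1 ≤ ‖(n : ℝ)‖ := by
          rw [norm_eq_abs]
          exact_mod_cast Int.one_le_abs hn
        rw [norm_mul, norm_mul]
        exact (mul_le_of_le_one_right (norm_nonneg _) (abs_sin_le_one _)).trans
          (le_mul_of_one_le_left (norm_nonneg _) hn1)
  have hterms : HasSum (fun n => (1 - ξ) * (F n * cos (2 * π * n * ξ)) -
      1 / (2 * π) * (G n * sin (2 * π * n * ξ)) - (1 - ξ) * (F n + n * G n)) _ :=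
    ((hcos.hasSum.mul_left _).sub (hsin.hasSum.mul_left _)).sub
      ((hzero ▸ (hF.add hnG).hasSum).mul_left _)
  rw [mul_zero, sub_zero] at hterms
  refine hterms.nonneg fun n => ?_
  rcases eq_or_ne n 0 with rfl | hn
  · simp
  have hangle : 2 * π * n * ξ = n * (2 * π) - n * (2 * π * (1 - ξ)) := by ring
  have hterm := mul_mul_one_sub_cos_le (m := n) (θ := 2 * π * (1 - ξ))
    (mul_nonneg two_pi_pos.le (sub_nonneg.2 hξ)) (Int.cast_ne_zero.2 hn) (hF0 n hn) (hFG n hn)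
  rw [hangle, cos_int_mul_two_pi_sub, sin_int_mul_two_pi_sub]
  refine (mul_nonneg (one_div_nonneg.2 two_pi_pos.le) (sub_nonneg.2 hterm)).trans_eq ?_
  field_simp
  ring

end Positivity

theorem statement19_general (α : ℕ) (hα : Even α) (hα4 : 4 ≤ α) (s : ℝ) (hs : 0 < s)
    (hmin : ∀ t : ℝ, 0 < t → latticeEnergy α s ≤ latticeEnergy α t)
    (F : ℝ → ℝ) (hF : ∀ x, F x = 1 / (1 + s ^ α * x ^ α)) :
    ∀ ξ : ℝ, ξ ≤ 1 →
      0 ≤ (1 - ξ) * (∑' n : ℤ, F n * Real.cos (2 * Real.pi * n * ξ))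
          - (1 / (2 * Real.pi)) * ∑' n : ℤ, deriv F n * Real.sin (2 * Real.pi * n * ξ) := by
  intro ξ hξ
  have hα2 : 2 ≤ α := by omega
  obtain rfl : F = fun x => profile α (s * x) := funext fun x => by rw [hF, profile, mul_pow]
  have hderiv (n : ℤ) : n * deriv (fun x => profile α (s * x)) n =
      s * n * deriv (profile α) (s * n) := by
    rw [deriv_comp_mul_left, smul_eq_mul]
    ring
  have hzero := tsum_profile_add_mul_deriv_eq_zero hα hα2 hs hmin
  have hthree := three_le_mul_one_sub_profile hα hα4
    (one_lt_of_forall_latticeEnergy_le hα hα4 hs hmin) hzero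
  refine nonneg_of_tsum_add_mul_eq_zero (summable_profile_int hα hα2 hs)
    (by simpa only [hderiv] using summable_mul_deriv_profile hα hα2 hs)
    (by simpa only [hderiv] using hzero) (fun n _ => (profile_pos hα _).le) (fun n hn => ?_) hξ
  have hle : profile α (s * n) ≤ profile α s :=
    profile_le_profile hα (by rw [abs_of_pos hs]; exact le_abs_mul_intCast hs.le hn)
  have hpos := (profile_pos hα (s * n)).le
  rw [hderiv, mul_deriv_profile hα, neg_neg]
  gcongr
  exact hthree.trans (by gcongr)

/-- For `α ≥ 4` and `0 ≤ ξ ≤ 1`,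
`(1 − ξ)·Σ_{n∈ℤ} F_α(n)cos(2πnξ) − (1/(2π))·Σ_{n∈ℤ} F_α′(n)sin(2πnξ) ≥ 0`. -/
theorem statement19 (α : ℕ) (hα : Even α) (hα4 : 4 ≤ α) (s : ℝ) (hs : 0 < s)
    (hmin : ∀ t : ℝ, 0 < t → latticeEnergy α s ≤ latticeEnergy α t)
    (F : ℝ → ℝ) (hF : ∀ x, F x = 1 / (1 + s ^ α * x ^ α)) :
    ∀ ξ : ℝ, 0 ≤ ξ → ξ ≤ 1 →
      0 ≤ (1 - ξ) * (∑' n : ℤ, F n * Real.cos (2 * Real.pi * n * ξ))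
          - (1 / (2 * Real.pi)) * ∑' n : ℤ, deriv F n * Real.sin (2 * Real.pi * n * ξ) :=
  fun ξ _ hξ => statement19_general α hα hα4 s hs hmin F hF ξ hξ
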